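/- Every integral lattice L in ℝ^5 with Λ5 ⊆ L is isometric (via a linear isometry of ℝ^5) to one of the eight lattices: Λ5; ⟨Λ5, u1⟩; ⟨Λ5, w⟩; ⟨Λ5, t⟩; ⟨Λ5, u1, u3⟩; ⟨Λ5, u1, f1⟩; ⟨Λ5, w, t⟩; and ⟨Λ5, u1, u3, f1⟩, where u1 = (ε1−ε2)/√2, u3 = (ε3−ε4)/√2, w = (ε1−ε2+ε3−ε4)/√2, t = √2·ε4, f1 = (ε1+ε2)/√2. -/

import Mathlib

noncomputable section

open scoped RealInnerProductSpace

/-- `ℝ^n` with the standard inner product. -/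
abbrev E (n : ℕ) := EuclideanSpace ℝ (Fin n)

/-- The standard basis vector `ε i`. -/
def εv {n : ℕ} (i : Fin n) : E n := EuclideanSpace.single i 1

/-- The vector of `ℝ^n` with the given coordinates. -/
def vec {n : ℕ} (x : Fin n → ℝ) : E n := (WithLp.equiv 2 (Fin n → ℝ)).symm x

/-- The vector of `ℝ^n` with the given integer coordinates. -/
def intVec {n : ℕ} (x : Fin n → ℤ) : E n := (WithLp.equiv 2 (Fin n → ℝ)).symm fun i => (x i : ℝ)

/-- A lattice is integral if all pairwise inner products of its elements are integers. -/
def LatticeIsIntegral {n : ℕ} (L : Submodule ℤ (E n)) : Prop :=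
  ∀ x ∈ L, ∀ y ∈ L, ∃ k : ℤ, ⟪x, y⟫ = (k : ℝ)

/-- Two lattices are isometric if a linear isometry of the ambient space carries
one onto the other. -/
def IsometricLattices {n : ℕ} (L M : Submodule ℤ (E n)) : Prop :=
  ∃ g : E n ≃ₗᵢ[ℝ] E n, g '' (L : Set (E n)) = (M : Set (E n))

/-- The laminated lattice `Λ₅ = {√2·x : x ∈ ℤ⁵, ∑ x i even} ≅ √2·D₅`. -/
def Λ5 : Submodule ℤ (E 5) :=
  Submodule.span ℤ
    {v : E 5 | ∃ x : Fin 5 → ℤ, Even (x 0 + x 1 + x 2 + x 3 + x 4) ∧ v = Real.sqrt 2 • intVec x}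

/-- `u1 = (ε1 - ε2)/√2`. -/
def u1 : E 5 := (Real.sqrt 2)⁻¹ • (εv 0 - εv 1)
/-- `u3 = (ε3 - ε4)/√2`. -/
def u3 : E 5 := (Real.sqrt 2)⁻¹ • (εv 2 - εv 3)
/-- `w = (ε1 - ε2 + ε3 - ε4)/√2`. -/
def w : E 5 := (Real.sqrt 2)⁻¹ • (εv 0 - εv 1 + εv 2 - εv 3)
/-- `t = √2·ε4`. -/
def t : E 5 := Real.sqrt 2 • εv 3
/-- `f1 = (ε1 + ε2)/√2`. -/
def f1 : E 5 := (Real.sqrt 2)⁻¹ • (εv 0 + εv 1)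

open Submodule

/-- The embedding `y ↦ y / √2` of `ℤ⁵`. -/
def phi : (Fin 5 → ℤ) →ₗ[ℤ] E 5 where
  toFun y := (Real.sqrt 2)⁻¹ • intVec y
  map_add' x y := by ext i; simp [intVec, mul_add]
  map_smul' c y := by ext i; simp [intVec]; ring

theorem phi_apply (y : Fin 5 → ℤ) (i : Fin 5) : phi y i = (Real.sqrt 2)⁻¹ * (y i : ℝ) := by
  simp [phi, intVec]

theorem s2 : (Real.sqrt 2)⁻¹ * 2 = Real.sqrt 2 := by
  have h : Real.sqrt 2 * Real.sqrt 2 = 2 := Real.mul_self_sqrt (by norm_num)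
  have h0 : Real.sqrt 2 ≠ 0 := by positivity
  field_simp
  linarith

theorem s2' : (Real.sqrt 2)⁻¹ * (Real.sqrt 2)⁻¹ = 1 / 2 := by
  have h : Real.sqrt 2 * Real.sqrt 2 = 2 := Real.mul_self_sqrt (by norm_num)
  rw [← mul_inv, h]; norm_num

theorem phi_two (z : Fin 5 → ℤ) : phi (fun i => 2 * z i) = Real.sqrt 2 • intVec z := by
  ext i
  rw [phi_apply]
  simp only [intVec, PiLp.smul_apply, WithLp.equiv_symm_apply, smul_eq_mul]
  push_cast
  rw [← mul_assoc, s2]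

theorem phi_two_mem (z : Fin 5 → ℤ) (hz : Even (z 0 + z 1 + z 2 + z 3 + z 4)) :
    phi (fun i => 2 * z i) ∈ Λ5 := by
  rw [phi_two]; exact subset_span ⟨z, hz, rfl⟩

theorem inner_phi (x y : Fin 5 → ℤ) :
    inner ℝ (phi x) (phi y) =
      ((x 0 * y 0 + x 1 * y 1 + x 2 * y 2 + x 3 * y 3 + x 4 * y 4 : ℤ) : ℝ) / 2 := by
  rw [PiLp.inner_apply, Fin.sum_univ_five]
  simp only [phi_apply, RCLike.inner_apply, conj_trivial]
  push_cast
  linear_combination ((x 0 * y 0 + x 1 * y 1 + x 2 * y 2 + x 3 * y 3 + x 4 * y 4 : ℝ)) * s2'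

theorem exists_phi (L : Submodule ℤ (E 5)) (hL : LatticeIsIntegral L) (hΛ : Λ5 ≤ L)
    (x : E 5) (hx : x ∈ L) : ∃ y, x = phi y := by
  have key : ∀ z : Fin 5 → ℤ, Even (z 0 + z 1 + z 2 + z 3 + z 4) →
      ∃ k : ℤ, Real.sqrt 2 * (x 0 * z 0 + x 1 * z 1 + x 2 * z 2 + x 3 * z 3 + x 4 * z 4) = k := by
    intro z hz
    obtain ⟨k, hk⟩ := hL x hx _ (hΛ (phi_two_mem z hz))
    refine ⟨k, ?_⟩
    rw [← hk, phi_two, PiLp.inner_apply, Fin.sum_univ_five]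
    simp [intVec]
    ring
  obtain ⟨k0, h0⟩ := key ![2, 0, 0, 0, 0] (by decide)
  obtain ⟨k1, h1⟩ := key ![1, 1, 0, 0, 0] (by decide)
  obtain ⟨k2, h2⟩ := key ![1, 0, 1, 0, 0] (by decide)
  obtain ⟨k3, h3⟩ := key ![1, 0, 0, 1, 0] (by decide)
  obtain ⟨k4, h4⟩ := key ![1, 0, 0, 0, 1] (by decide)
  obtain ⟨m, hm⟩ := hL x hx x hx
  rw [PiLp.inner_apply, Fin.sum_univ_five] at hm
  simp at h0 h1 h2 h3 h4 hm
  have hs : Real.sqrt 2 * Real.sqrt 2 = 2 := Real.mul_self_sqrt (by norm_num)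
  have e : (k0 ^ 2 + (2 * k1 - k0) ^ 2 + (2 * k2 - k0) ^ 2 + (2 * k3 - k0) ^ 2
      + (2 * k4 - k0) ^ 2 : ℤ) = 8 * m := by
    have : ((k0 ^ 2 + (2 * k1 - k0) ^ 2 + (2 * k2 - k0) ^ 2 + (2 * k3 - k0) ^ 2
      + (2 * k4 - k0) ^ 2 : ℤ) : ℝ) = (8 * m : ℤ) := by
      push_cast
      rw [← h0, ← h1, ← h2, ← h3, ← h4, ← hm]
      linear_combination (4 * (x 0 ^ 2 + x 1 ^ 2 + x 2 ^ 2 + x 3 ^ 2 + x 4 ^ 2)) * hs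
    exact_mod_cast this
  have he : Even k0 := by
    by_contra ho
    rw [Int.not_even_iff_odd] at ho
    have sq : ∀ a : ℤ, Odd a → ∃ b, a ^ 2 = 8 * b + 1 := by
      intro a ha
      have := Int.sq_mod_four_eq_one_of_odd ha
      obtain ⟨c, rfl⟩ := ha
      obtain ⟨d, hd⟩ := Int.even_mul_succ_self c
      exact ⟨d, by linear_combination 4 * hd⟩
    have od : ∀ a : ℤ, Odd (2 * a - k0) := fun a => by
      obtain ⟨c, rfl⟩ := ho
      exact ⟨a - c - 1, by ring⟩
    obtain ⟨b0, g0⟩ := sq _ ho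
    obtain ⟨b1, g1⟩ := sq _ (od k1)
    obtain ⟨b2, g2⟩ := sq _ (od k2)
    obtain ⟨b3, g3⟩ := sq _ (od k3)
    obtain ⟨b4, g4⟩ := sq _ (od k4)
    omega
  obtain ⟨c, rfl⟩ := he
  have inv : ∀ r : ℝ, ∀ k : ℤ, Real.sqrt 2 * r = k → r = (Real.sqrt 2)⁻¹ * k := by
    intro r k h
    rw [← h]
    have h0 : Real.sqrt 2 ≠ 0 := by positivity
    field_simp
  push_cast at h0
  refine ⟨![c, k1 - c, k2 - c, k3 - c, k4 - c], ?_⟩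
  ext i
  rw [phi_apply]
  apply inv
  fin_cases i <;> simp <;> linarith

/-- Integer coordinate vectors form a nice lattice. -/
structure Nice (S : Submodule ℤ (Fin 5 → ℤ)) : Prop where
  dot : ∀ x ∈ S, ∀ y ∈ S, Even (x 0 * y 0 + x 1 * y 1 + x 2 * y 2 + x 3 * y 3 + x 4 * y 4)
  two : ∀ z : Fin 5 → ℤ, Even (z 0 + z 1 + z 2 + z 3 + z 4) → (fun i => 2 * z i) ∈ S

/-- The eight alternatives. -/
def Good (L : Submodule ℤ (E 5)) : Prop :=
    IsometricLattices L Λ5 ∨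
    IsometricLattices L (Λ5 ⊔ Submodule.span ℤ {u1}) ∨
    IsometricLattices L (Λ5 ⊔ Submodule.span ℤ {w}) ∨
    IsometricLattices L (Λ5 ⊔ Submodule.span ℤ {t}) ∨
    IsometricLattices L (Λ5 ⊔ Submodule.span ℤ {u1, u3}) ∨
    IsometricLattices L (Λ5 ⊔ Submodule.span ℤ {u1, f1}) ∨
    IsometricLattices L (Λ5 ⊔ Submodule.span ℤ {w, t}) ∨
    IsometricLattices L (Λ5 ⊔ Submodule.span ℤ {u1, u3, f1})

theorem IsometricLattices.trans' {L M N : Submodule ℤ (E 5)} (h : IsometricLattices L M)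
    (h' : IsometricLattices M N) : IsometricLattices L N := by
  obtain ⟨g, hg⟩ := h
  obtain ⟨k, hk⟩ := h'
  refine ⟨g.trans k, ?_⟩
  rw [← hk, ← hg, Set.image_image]
  rfl

theorem iso_refl (L : Submodule ℤ (E 5)) : IsometricLattices L L :=
  ⟨LinearIsometryEquiv.refl ℝ _, by simp⟩

theorem Good.of_iso {L M : Submodule ℤ (E 5)} (h : IsometricLattices L M) (hM : Good M) :
    Good L := by
  unfold Good at *
  rcases hM with h' | h' | h' | h' | h' | h' | h' | h' <;> have := h.trans' h' <;> tauto

/-- Flip the sign of coordinate `j`. -/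
def sflip (j : Fin 5) : (Fin 5 → ℤ) →ₗ[ℤ] (Fin 5 → ℤ) where
  toFun y i := if i = j then - y i else y i
  map_add' x y := by ext i; simp; split_ifs <;> ring
  map_smul' c x := by ext i; simp

theorem sflip_sflip (j : Fin 5) (y : Fin 5 → ℤ) : sflip j (sflip j y) = y := by
  ext i; simp [sflip]; split_ifs <;> simp

theorem good_flip (j : Fin 5) (S : Submodule ℤ (Fin 5 → ℤ))
    (h : Good ((S.comap (sflip j)).map phi)) : Good (S.map phi) := by
  refine Good.of_iso ?_ h
  let g : E 5 ≃ₗᵢ[ℝ] E 5 := LinearIsometryEquiv.piLpCongrRight 2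
    (fun i => if i = j then LinearIsometryEquiv.neg ℝ else LinearIsometryEquiv.refl ℝ ℝ)
  have hg : ∀ y, g (phi y) = phi (sflip j y) := by
    intro y
    ext i
    simp only [g, LinearIsometryEquiv.piLpCongrRight_apply, phi_apply, sflip]
    by_cases hij : i = j <;> simp [hij]
  refine ⟨g, ?_⟩
  ext v
  simp only [Set.mem_image, SetLike.mem_coe, Submodule.mem_map, Submodule.mem_comap]
  constructor
  · rintro ⟨_, ⟨y, hy, rfl⟩, rfl⟩
    exact ⟨sflip j y, by rwa [sflip_sflip], (hg y).symm⟩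
  · rintro ⟨y, hy, rfl⟩
    exact ⟨_, ⟨_, hy, rfl⟩, by rw [hg, sflip_sflip]⟩

theorem nice_flip (j : Fin 5) {S : Submodule ℤ (Fin 5 → ℤ)} (h : Nice S) :
    Nice (S.comap (sflip j)) := by
  constructor
  · intro x hx y hy
    have := h.dot _ hx _ hy
    simp only [sflip, LinearMap.coe_mk, AddHom.coe_mk] at this
    fin_cases j <;> simpa using this
  · intro z hz
    have := h.two (sflip j z) (by
      simp only [sflip, LinearMap.coe_mk, AddHom.coe_mk]
      fin_cases j <;> simp <;> grind)
    rw [Submodule.mem_comap]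
    convert this using 1
    ext i; simp [sflip]

theorem good_perm (σ : Equiv.Perm (Fin 5)) (S : Submodule ℤ (Fin 5 → ℤ))
    (h : Good ((S.comap (LinearMap.funLeft ℤ ℤ σ)).map phi)) : Good (S.map phi) := by
  refine Good.of_iso ?_ h
  let g : E 5 ≃ₗᵢ[ℝ] E 5 := LinearIsometryEquiv.piLpCongrLeft 2 ℝ ℝ σ
  have hg : ∀ y : Fin 5 → ℤ, g (phi y) = phi (y ∘ σ.symm) := by
    intro y
    ext i
    simp [g, phi_apply, LinearIsometryEquiv.piLpCongrLeft_apply, Equiv.piCongrLeft']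
  refine ⟨g, ?_⟩
  ext v
  simp only [Set.mem_image, SetLike.mem_coe, Submodule.mem_map, Submodule.mem_comap]
  constructor
  · rintro ⟨_, ⟨y, hy, rfl⟩, rfl⟩
    refine ⟨y ∘ σ.symm, ?_, (hg y).symm⟩
    convert hy
    ext i; simp [LinearMap.funLeft_apply]
  · rintro ⟨y, hy, rfl⟩
    refine ⟨_, ⟨_, hy, rfl⟩, ?_⟩
    rw [hg]
    congr 1
    ext i; simp [LinearMap.funLeft_apply]

theorem nice_perm (σ : Equiv.Perm (Fin 5)) {S : Submodule ℤ (Fin 5 → ℤ)} (h : Nice S) :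
    Nice (S.comap (LinearMap.funLeft ℤ ℤ σ)) := by
  constructor
  · intro x hx y hy
    have := h.dot _ hx _ hy
    simp only [LinearMap.funLeft_apply] at this
    have e := Equiv.sum_comp σ (fun i => x i * y i)
    simp only [Fin.sum_univ_five] at e
    rwa [e] at this
  · intro z hz
    refine h.two (z ∘ σ) ?_
    have e := Equiv.sum_comp σ z
    simp only [Fin.sum_univ_five] at e
    simpa [e] using hz

theorem phi_u1 : phi ![1, -1, 0, 0, 0] = u1 := by
  ext i; rw [phi_apply]; fin_cases i <;> simp [u1, εv]
theorem phi_u3 : phi ![0, 0, 1, -1, 0] = u3 := by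
  ext i; rw [phi_apply]; fin_cases i <;> simp [u3, εv]
theorem phi_w : phi ![1, -1, 1, -1, 0] = w := by
  ext i; rw [phi_apply]; fin_cases i <;> simp [w, εv]
theorem phi_f1 : phi ![1, 1, 0, 0, 0] = f1 := by
  ext i; rw [phi_apply]; fin_cases i <;> simp [f1, εv]
theorem phi_t : phi ![0, 0, 0, 2, 0] = t := by
  ext i; rw [phi_apply]; fin_cases i <;> simp [t, εv, s2]

theorem Nice.Λ_le {S : Submodule ℤ (Fin 5 → ℤ)} (h : Nice S) : Λ5 ≤ S.map phi := by
  rw [Λ5, span_le]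
  rintro _ ⟨z, hz, rfl⟩
  rw [← phi_two]
  exact ⟨_, h.two z hz, rfl⟩

/-- Congruence modulo `2 D₅`. -/
theorem Nice.congr {S : Submodule ℤ (Fin 5 → ℤ)} (h : Nice S) {x y : Fin 5 → ℤ} (hx : x ∈ S)
    (z : Fin 5 → ℤ) (hz : Even (z 0 + z 1 + z 2 + z 3 + z 4)) (e : ∀ i, y i = x i + 2 * z i) :
    y ∈ S := by
  have : y = x + fun i => 2 * z i := by ext i; simp [e]
  rw [this]
  exact add_mem hx (h.two z hz)

/-- An element of `S` all of whose coordinates are even lies in every lattice `N ⊇ Λ5`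
as soon as `t ∈ S` implies `t ∈ N`. -/
theorem Nice.even_mem {S : Submodule ℤ (Fin 5 → ℤ)} (h : Nice S) {N : Submodule ℤ (E 5)}
    (hN : Λ5 ≤ N) (ht : ![0, 0, 0, 2, 0] ∈ S → t ∈ N) (y : Fin 5 → ℤ) (hy : y ∈ S)
    (he : ∀ i, Even (y i)) : phi y ∈ N := by
  choose z hz using he
  by_cases hs : Even (z 0 + z 1 + z 2 + z 3 + z 4)
  · have := hN (phi_two_mem z hs)
    convert this using 2
    ext i; rw [hz]; ring
  · have hs' : Even (z 0 + z 1 + z 2 + (z 3 - 1) + z 4) := by grind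
    have hs'' : Even (-z 0 + -z 1 + -z 2 + (1 - z 3) + -z 4) := by grind
    have h1 : ![0, 0, 0, 2, 0] ∈ S := by
      refine h.congr hy ![-z 0, -z 1, -z 2, 1 - z 3, -z 4] hs'' ?_
      intro i
      rw [hz]
      fin_cases i <;> simp <;> ring
    have h2 := add_mem (ht h1) (hN (phi_two_mem ![z 0, z 1, z 2, z 3 - 1, z 4] hs'))
    rw [← phi_t, ← map_add] at h2
    convert h2 using 2
    ext i; rw [hz]
    fin_cases i <;> simp <;> ring

theorem phi_sub_mem {N : Submodule ℤ (E 5)} {x y : Fin 5 → ℤ} (hx : phi x ∈ N)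
    (hy : phi (y - x) ∈ N) : phi y ∈ N := by
  rw [map_sub] at hy
  simpa using add_mem hy hx

theorem mem_phi {S : Submodule ℤ (Fin 5 → ℤ)} {x : Fin 5 → ℤ} (hx : x ∈ S) :
    phi x ∈ S.map phi := ⟨x, hx, rfl⟩

theorem Nice.sum_even {S : Submodule ℤ (Fin 5 → ℤ)} (h : Nice S) {x : Fin 5 → ℤ} (hx : x ∈ S) :
    Even (x 0 + x 1 + x 2 + x 3 + x 4) := by
  have := h.dot x hx x hx
  simp only [Int.even_add, Int.even_mul, or_self] at this ⊢
  exact this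

/-- Code zero. -/
theorem good_zero {S : Submodule ℤ (Fin 5 → ℤ)} (h : Nice S)
    (hz : ∀ y ∈ S, ∀ i, Even (y i)) : Good (S.map phi) := by
  by_cases ht : ![0, 0, 0, 2, 0] ∈ S
  · have : S.map phi = Λ5 ⊔ span ℤ {t} := by
      apply le_antisymm
      · rintro _ ⟨y, hy, rfl⟩
        exact h.even_mem le_sup_left
          (fun _ => mem_sup_right (mem_span_of_mem (by simp))) y hy (hz y hy)
      · refine sup_le h.Λ_le (span_le.2 ?_)
        rintro _ rfl
        rw [← phi_t]; exact mem_phi ht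
    rw [this]
    have := iso_refl (Λ5 ⊔ span ℤ {t})
    unfold Good; tauto
  · have : S.map phi = Λ5 := by
      apply le_antisymm
      · rintro _ ⟨y, hy, rfl⟩
        exact h.even_mem le_rfl (fun h => absurd h ht) y hy (hz y hy)
      · exact h.Λ_le
    rw [this]
    exact Or.inl (iso_refl _)

/-- Code generated by a word of weight four. -/
theorem good_four {S : Submodule ℤ (Fin 5 → ℤ)} (h : Nice S) (hw : ![1, -1, 1, -1, 0] ∈ S)
    (hz : ∀ y ∈ S, (∀ i, Even (y i)) ∨ (∀ i, Even (y i - (![1, -1, 1, -1, 0] : Fin 5 → ℤ) i))) :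
    Good (S.map phi) := by
  have main : ∀ N : Submodule ℤ (E 5), Λ5 ≤ N → w ∈ N → (![0, 0, 0, 2, 0] ∈ S → t ∈ N) →
      S.map phi ≤ N := by
    rintro N hN hwN ht _ ⟨y, hy, rfl⟩
    rcases hz y hy with h' | h'
    · exact h.even_mem hN ht y hy h'
    · exact phi_sub_mem (by rwa [phi_w]) (h.even_mem hN ht _ (sub_mem hy hw) h')
  by_cases ht : ![0, 0, 0, 2, 0] ∈ S
  · have : S.map phi = Λ5 ⊔ span ℤ {w, t} := by
      apply le_antisymm
      · exact main _ le_sup_left (mem_sup_right (mem_span_of_mem (by simp)))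
          (fun _ => mem_sup_right (mem_span_of_mem (by simp)))
      · refine sup_le h.Λ_le (span_le.2 ?_)
        rintro _ (rfl | rfl)
        · rw [← phi_w]; exact mem_phi hw
        · rw [← phi_t]; exact mem_phi ht
    rw [this]
    have := iso_refl (Λ5 ⊔ span ℤ {w, t})
    unfold Good; tauto
  · have : S.map phi = Λ5 ⊔ span ℤ {w} := by
      apply le_antisymm
      · exact main _ le_sup_left (mem_sup_right (mem_span_of_mem (by simp)))
          (fun h => absurd h ht)
      · refine sup_le h.Λ_le (span_le.2 ?_)
        rintro _ rfl
        rw [← phi_w]; exact mem_phi hw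
    rw [this]
    have := iso_refl (Λ5 ⊔ span ℤ {w})
    unfold Good; tauto

theorem t_of_f1 {N : Submodule ℤ (E 5)} (hN : Λ5 ≤ N) (h1 : u1 ∈ N) (h2 : f1 ∈ N) : t ∈ N := by
  rw [← phi_t]
  rw [← phi_u1] at h1
  rw [← phi_f1] at h2
  have h3 := add_mem (sub_mem h2 h1) (hN (phi_two_mem ![0, -1, 0, 1, 0] (by decide)))
  rw [← map_sub, ← map_add] at h3
  convert h3 using 2
  ext i; fin_cases i <;> simp

theorem Nice.f1_mem {S : Submodule ℤ (Fin 5 → ℤ)} (h : Nice S) (h1 : ![1, -1, 0, 0, 0] ∈ S)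
    (ht : ![0, 0, 0, 2, 0] ∈ S) : f1 ∈ S.map phi := by
  rw [← phi_f1]
  refine mem_phi (h.congr (add_mem h1 ht) ![0, 1, 0, -1, 0] (by decide) ?_)
  intro i; fin_cases i <;> simp

/-- Code generated by a word of weight two. -/
theorem good_two {S : Submodule ℤ (Fin 5 → ℤ)} (h : Nice S) (hu : ![1, -1, 0, 0, 0] ∈ S)
    (hz : ∀ y ∈ S, (∀ i, Even (y i)) ∨ (∀ i, Even (y i - (![1, -1, 0, 0, 0] : Fin 5 → ℤ) i))) :
    Good (S.map phi) := by
  have main : ∀ N : Submodule ℤ (E 5), Λ5 ≤ N → u1 ∈ N → (![0, 0, 0, 2, 0] ∈ S → t ∈ N) →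
      S.map phi ≤ N := by
    rintro N hN hwN ht _ ⟨y, hy, rfl⟩
    rcases hz y hy with h' | h'
    · exact h.even_mem hN ht y hy h'
    · exact phi_sub_mem (by rwa [phi_u1]) (h.even_mem hN ht _ (sub_mem hy hu) h')
  by_cases ht : ![0, 0, 0, 2, 0] ∈ S
  · have : S.map phi = Λ5 ⊔ span ℤ {u1, f1} := by
      have m1 : u1 ∈ Λ5 ⊔ span ℤ {u1, f1} := mem_sup_right (mem_span_of_mem (by simp))
      have m2 : f1 ∈ Λ5 ⊔ span ℤ {u1, f1} := mem_sup_right (mem_span_of_mem (by simp))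
      apply le_antisymm
      · exact main _ le_sup_left m1 (fun _ => t_of_f1 le_sup_left m1 m2)
      · refine sup_le h.Λ_le (span_le.2 ?_)
        rintro _ (rfl | rfl)
        · rw [← phi_u1]; exact mem_phi hu
        · exact h.f1_mem hu ht
    rw [this]
    have := iso_refl (Λ5 ⊔ span ℤ {u1, f1})
    unfold Good; tauto
  · have : S.map phi = Λ5 ⊔ span ℤ {u1} := by
      apply le_antisymm
      · exact main _ le_sup_left (mem_sup_right (mem_span_of_mem (by simp)))
          (fun h => absurd h ht)
      · refine sup_le h.Λ_le (span_le.2 ?_)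
        rintro _ rfl
        rw [← phi_u1]; exact mem_phi hu
    rw [this]
    have := iso_refl (Λ5 ⊔ span ℤ {u1})
    unfold Good; tauto

/-- Two-dimensional code. -/
theorem good_two_two {S : Submodule ℤ (Fin 5 → ℤ)} (h : Nice S) (hu : ![1, -1, 0, 0, 0] ∈ S)
    (hv : ![0, 0, 1, -1, 0] ∈ S) : Good (S.map phi) := by
  have main : ∀ N : Submodule ℤ (E 5), Λ5 ≤ N → u1 ∈ N → u3 ∈ N →
      (![0, 0, 0, 2, 0] ∈ S → t ∈ N) → S.map phi ≤ N := by
    rintro N hN huN hvN ht _ ⟨y, hy, rfl⟩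
    have a1 := h.dot _ hy _ hu
    have a2 := h.dot _ hy _ hv
    have a3 := h.sum_even hy
    rw [← phi_u1] at huN
    rw [← phi_u3] at hvN
    have m1 := N.smul_mem (y 0) huN
    have m2 := N.smul_mem (y 2) hvN
    rw [← map_smul] at m1 m2
    refine phi_sub_mem m1 (phi_sub_mem m2 (h.even_mem hN ht _
      (sub_mem (sub_mem hy (S.smul_mem _ hu)) (S.smul_mem _ hv)) ?_))
    simp at a1 a2
    intro i
    fin_cases i <;> simp [Matrix.vecHead, Matrix.vecTail] <;> grind
  by_cases ht : ![0, 0, 0, 2, 0] ∈ S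
  · have : S.map phi = Λ5 ⊔ span ℤ {u1, u3, f1} := by
      have m1 : u1 ∈ Λ5 ⊔ span ℤ {u1, u3, f1} := mem_sup_right (mem_span_of_mem (by simp))
      have m2 : f1 ∈ Λ5 ⊔ span ℤ {u1, u3, f1} := mem_sup_right (mem_span_of_mem (by simp))
      apply le_antisymm
      · exact main _ le_sup_left m1 (mem_sup_right (mem_span_of_mem (by simp)))
          (fun _ => t_of_f1 le_sup_left m1 m2)
      · refine sup_le h.Λ_le (span_le.2 ?_)
        rintro _ (rfl | rfl | rfl)
        · rw [← phi_u1]; exact mem_phi hu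
        · rw [← phi_u3]; exact mem_phi hv
        · exact h.f1_mem hu ht
    rw [this]
    have := iso_refl (Λ5 ⊔ span ℤ {u1, u3, f1})
    unfold Good; tauto
  · have : S.map phi = Λ5 ⊔ span ℤ {u1, u3} := by
      apply le_antisymm
      · exact main _ le_sup_left (mem_sup_right (mem_span_of_mem (by simp)))
          (mem_sup_right (mem_span_of_mem (by simp))) (fun h => absurd h ht)
      · refine sup_le h.Λ_le (span_le.2 ?_)
        rintro _ (rfl | rfl)
        · rw [← phi_u1]; exact mem_phi hu
        · rw [← phi_u3]; exact mem_phi hv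
    rw [this]
    have := iso_refl (Λ5 ⊔ span ℤ {u1, u3})
    unfold Good; tauto

/-- If `y ∈ S` is congruent to `x` mod 2 and `x j = 1`, then `x ∈ S` up to the sflip at `j`. -/
theorem Nice.lift {S : Submodule ℤ (Fin 5 → ℤ)} (h : Nice S) {y : Fin 5 → ℤ} (hy : y ∈ S)
    (x : Fin 5 → ℤ) (hx : ∀ i, Even (x i - y i)) (j : Fin 5) (hj : x j = 1) :
    x ∈ S ∨ x ∈ S.comap (sflip j) := by
  choose z hz using hx
  by_cases hs : Even (z 0 + z 1 + z 2 + z 3 + z 4)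
  · exact Or.inl (h.congr hy z hs (fun i => by linarith [hz i]))
  · right
    rw [Submodule.mem_comap]
    refine h.congr hy (fun i => z i - if i = j then 1 else 0) ?_ ?_
    · fin_cases j <;> simp <;> grind
    · intro i
      have := hz i
      by_cases hij : i = j
      · subst hij; simp [sflip]; linarith
      · simp [sflip, hij]; linarith

/-- Second word of weight two. -/
theorem good_two_aux {S : Submodule ℤ (Fin 5 → ℤ)} (h : Nice S) (hu : ![1, -1, 0, 0, 0] ∈ S)
    {y : Fin 5 → ℤ} (hy : y ∈ S) (h0 : Even (y 0)) (h1 : Even (y 1)) (h2 : Odd (y 2))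
    (h3 : Odd (y 3)) (h4 : Even (y 4)) : Good (S.map phi) := by
  rcases h.lift hy ![0, 0, 1, -1, 0] (by intro i; fin_cases i <;> simp <;> grind) 2 rfl with h' | h'
  · exact good_two_two h hu h'
  · refine good_flip 2 S (good_two_two (nice_flip 2 h) ?_ h')
    rw [Submodule.mem_comap]
    convert hu using 1
    ext i; fin_cases i <;> simp [sflip]

theorem good_u {S : Submodule ℤ (Fin 5 → ℤ)} (h : Nice S) (hu : ![1, -1, 0, 0, 0] ∈ S) :
    Good (S.map phi) := by
  by_cases hz : ∀ y ∈ S, (∀ i, Even (y i)) ∨ (∀ i, Even (y i - (![1, -1, 0, 0, 0] : Fin 5 → ℤ) i))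
  · exact good_two h hu hz
  push Not at hz
  obtain ⟨y, hy, ⟨i, hi⟩, ⟨k, hk⟩⟩ := hz
  -- make the first two coordinates even
  obtain ⟨y, hy, h0, h1, hne⟩ : ∃ y ∈ S, Even (y 0) ∧ Even (y 1) ∧
      ¬ (Even (y 2) ∧ Even (y 3) ∧ Even (y 4)) := by
    have a1 := h.dot _ hy _ hu
    simp at a1
    by_cases h0 : Even (y 0)
    · refine ⟨y, hy, h0, by grind, ?_⟩
      rintro ⟨h2, h3, h4⟩
      apply hi
      fin_cases i <;> simp <;> grind
    · refine ⟨y - ![1, -1, 0, 0, 0], sub_mem hy hu, by simp; grind, by simp; grind, ?_⟩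
      rintro ⟨h2, h3, h4⟩
      apply hk
      simp at h2 h3 h4
      fin_cases k <;> simp <;> grind
  have hs := h.sum_even hy
  have perm : ∀ σ : Equiv.Perm (Fin 5), σ 0 = 0 → σ 1 = 1 →
      Odd (y (σ.symm 2)) → Odd (y (σ.symm 3)) → Even (y (σ.symm 4)) → Good (S.map phi) := by
    intro σ s0 s1 o2 o3 o4
    have s0' : σ.symm 0 = 0 := by rw [Equiv.symm_apply_eq, s0]
    have s1' : σ.symm 1 = 1 := by rw [Equiv.symm_apply_eq, s1]
    refine good_perm σ S (good_two_aux (nice_perm σ h) ?_ (y := y ∘ σ.symm) ?_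
      (by simpa [s0']) (by simpa [s1']) o2 o3 o4)
    · rw [Submodule.mem_comap]
      convert hu using 1
      ext i
      rw [LinearMap.funLeft_apply]
      have inj : ∀ a, σ i = σ a → i = a := fun a h => σ.injective h
      by_cases e0 : i = 0
      · subst e0; rw [s0]
      by_cases e1 : i = 1
      · subst e1; rw [s1]
      have e0' : σ i ≠ 0 := fun h => e0 (inj 0 (by rw [h, s0]))
      have e1' : σ i ≠ 1 := fun h => e1 (inj 1 (by rw [h, s1]))
      have zero : ∀ a : Fin 5, a ≠ 0 → a ≠ 1 → (![1, -1, 0, 0, 0] : Fin 5 → ℤ) a = 0 := by decide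
      rw [zero _ e0' e1', zero _ e0 e1]
    · rw [Submodule.mem_comap]
      convert hy using 1
      ext i; simp [LinearMap.funLeft_apply]
  by_cases h4 : Even (y 4)
  · exact perm 1 rfl rfl (by change Odd (y 2); grind) (by change Odd (y 3); grind) h4
  by_cases h3 : Even (y 3)
  · exact perm (Equiv.swap 3 4) (by decide) (by decide)
      (by rw [show (Equiv.swap (3 : Fin 5) 4).symm 2 = 2 by decide]; grind)
      (by rw [show (Equiv.swap (3 : Fin 5) 4).symm 3 = 4 by decide]; grind)
      (by rw [show (Equiv.swap (3 : Fin 5) 4).symm 4 = 3 by decide]; grind)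
  · exact perm (Equiv.swap 2 4) (by decide) (by decide)
      (by rw [show (Equiv.swap (2 : Fin 5) 4).symm 2 = 4 by decide]; grind)
      (by rw [show (Equiv.swap (2 : Fin 5) 4).symm 3 = 3 by decide]; grind)
      (by rw [show (Equiv.swap (2 : Fin 5) 4).symm 4 = 2 by decide]; grind)

theorem good_u' {S : Submodule ℤ (Fin 5 → ℤ)} (h : Nice S)
    {y : Fin 5 → ℤ} (hy : y ∈ S) (h0 : Odd (y 0)) (h1 : Odd (y 1)) (h2 : Even (y 2))
    (h3 : Even (y 3)) (h4 : Even (y 4)) : Good (S.map phi) := by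
  rcases h.lift hy ![1, -1, 0, 0, 0] (by intro i; fin_cases i <;> simp <;> grind) 0 rfl with h' | h'
  · exact good_u h h'
  · exact good_flip 0 S (good_u (nice_flip 0 h) h')

/-- Some word of weight two, in arbitrary position. -/
theorem good_weight_two {S : Submodule ℤ (Fin 5 → ℤ)} (h : Nice S)
    {y : Fin 5 → ℤ} (hy : y ∈ S) (a b : Fin 5) (hab : a ≠ b) (ha : Odd (y a)) (hb : Odd (y b))
    (hc : ∀ c, c ≠ a → c ≠ b → Even (y c)) : Good (S.map phi) := by
  obtain ⟨τ, t0, t1⟩ : ∃ τ : Equiv.Perm (Fin 5), τ 0 = a ∧ τ 1 = b := by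
    have H : ∀ a b : Fin 5, a ≠ b → (Equiv.swap 0 a * Equiv.swap 1 (Equiv.swap 0 a b)) 0 = a ∧
        (Equiv.swap 0 a * Equiv.swap 1 (Equiv.swap 0 a b)) 1 = b := by decide
    exact ⟨_, H a b hab⟩
  have ne : ∀ c, c ≠ 0 → c ≠ 1 → Even ((y ∘ τ) c) := by
    intro c c0 c1
    refine hc _ (fun e => c0 (τ.injective (by rw [e, t0]))) (fun e => c1 (τ.injective (by rw [e, t1])))
  refine good_perm τ.symm S (good_u' (nice_perm _ h) (y := y ∘ τ) ?_ (by simpa [t0]) (by simpa [t1])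
    (ne _ (by decide) (by decide)) (ne _ (by decide) (by decide)) (ne _ (by decide) (by decide)))
  rw [Submodule.mem_comap]
  convert hy using 1
  ext i; simp [LinearMap.funLeft_apply]

/-- The property of having no words of weight two. -/
def NoTwo (S : Submodule ℤ (Fin 5 → ℤ)) : Prop :=
  ∀ y ∈ S, ∀ a b : Fin 5, a ≠ b → Odd (y a) → Odd (y b) →
    ∃ c, c ≠ a ∧ c ≠ b ∧ Odd (y c)

theorem good_w {S : Submodule ℤ (Fin 5 → ℤ)} (h : Nice S) (hn : NoTwo S)
    (hw : ![1, -1, 1, -1, 0] ∈ S) : Good (S.map phi) := by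
  refine good_four h hw ?_
  intro y hy
  have hs := h.sum_even hy
  have hd := h.dot _ hy _ hw
  simp at hd
  have h4 : Even (y 4) := by grind
  have hn' := hn y hy
  have key : (Even (y 0) ∧ Even (y 1) ∧ Even (y 2) ∧ Even (y 3)) ∨
      (Odd (y 0) ∧ Odd (y 1) ∧ Odd (y 2) ∧ Odd (y 3)) := by
    clear hn hw hy h
    simp only [Fin.exists_fin_succ, Fin.forall_fin_succ] at hn'
    simp at hn'
    simp only [← Int.not_even_iff_odd, Int.even_add] at *
    by_cases b0 : Even (y 0) <;> by_cases b1 : Even (y 1) <;> by_cases b2 : Even (y 2) <;>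
      by_cases b3 : Even (y 3) <;> simp_all
  rcases key with ⟨k0, k1, k2, k3⟩ | ⟨k0, k1, k2, k3⟩
  · left; intro i; fin_cases i <;> assumption
  · right; intro i; fin_cases i <;> simp <;> grind

theorem good_w' {S : Submodule ℤ (Fin 5 → ℤ)} (h : Nice S) (hn : NoTwo S)
    {y : Fin 5 → ℤ} (hy : y ∈ S) (h0 : Odd (y 0)) (h1 : Odd (y 1)) (h2 : Odd (y 2))
    (h3 : Odd (y 3)) (h4 : Even (y 4)) : Good (S.map phi) := by
  rcases h.lift hy ![1, -1, 1, -1, 0] (by intro i; fin_cases i <;> simp <;> grind) 0 rfl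
    with h' | h'
  · exact good_w h hn h'
  · refine good_flip 0 S (good_w (nice_flip 0 h) ?_ h')
    intro x hx a b hab ha hb
    have fo : ∀ i, Odd (sflip 0 x i) ↔ Odd (x i) := by
      intro i; simp only [sflip, LinearMap.coe_mk, AddHom.coe_mk]; split_ifs <;> simp
    obtain ⟨c, c1, c2, c3⟩ := hn _ hx a b hab ((fo a).2 ha) ((fo b).2 hb)
    exact ⟨c, c1, c2, (fo c).1 c3⟩

theorem good_weight_four {S : Submodule ℤ (Fin 5 → ℤ)} (h : Nice S) (hn : NoTwo S)
    {y : Fin 5 → ℤ} (hy : y ∈ S) (a : Fin 5) (ha : Even (y a))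
    (hc : ∀ c, c ≠ a → Odd (y c)) : Good (S.map phi) := by
  have ne : ∀ c, c ≠ 4 → Odd ((y ∘ Equiv.swap 4 a) c) := by
    intro c c0
    exact hc _ (fun e => c0 ((Equiv.swap 4 a).injective (by rw [e, Equiv.swap_apply_left])))
  refine good_perm (Equiv.swap 4 a) S (good_w' (nice_perm _ h) ?_ (y := y ∘ Equiv.swap 4 a) ?_
    (ne _ (by decide)) (ne _ (by decide)) (ne _ (by decide)) (ne _ (by decide)) (by simpa))
  · intro x hx b d hbd hb hd
    obtain ⟨c, c1, c2, c3⟩ := hn _ hx (Equiv.swap 4 a b) (Equiv.swap 4 a d)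
      (fun e => hbd ((Equiv.swap 4 a).injective e))
      (by simpa [LinearMap.funLeft_apply]) (by simpa [LinearMap.funLeft_apply])
    refine ⟨Equiv.swap 4 a c, ?_, ?_, by simpa [LinearMap.funLeft_apply] using c3⟩
    · rintro rfl; simp at c1
    · rintro rfl; simp at c2
  · rw [Submodule.mem_comap]
    convert hy using 1
    ext i; simp [LinearMap.funLeft_apply]

theorem good_nice {S : Submodule ℤ (Fin 5 → ℤ)} (h : Nice S) : Good (S.map phi) := by
  by_cases hn : NoTwo S
  · by_cases hz : ∀ y ∈ S, ∀ i, Even (y i)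
    · exact good_zero h hz
    push Not at hz
    obtain ⟨y, hy, i, hi⟩ := hz
    have hs := h.sum_even hy
    have hn' := hn y hy
    have : ∃ a, Even (y a) ∧ ∀ c, c ≠ a → Odd (y c) := by
      have hi' : ¬ ∀ i, Even (y i) := fun h => hi (h i)
      clear hi
      simp only [Fin.exists_fin_succ, Fin.forall_fin_succ] at hn' hi' ⊢
      simp at hn' hi' ⊢
      simp only [← Int.not_even_iff_odd, Int.even_add] at *
      by_cases b0 : Even (y 0) <;> by_cases b1 : Even (y 1) <;> by_cases b2 : Even (y 2) <;>
        by_cases b3 : Even (y 3) <;> by_cases b4 : Even (y 4) <;> simp_all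
    obtain ⟨a, ha, hc⟩ := this
    exact good_weight_four h hn hy a ha hc
  · unfold NoTwo at hn
    push Not at hn
    obtain ⟨y, hy, a, b, hab, ha, hb, hc⟩ := hn
    exact good_weight_two h hy a b hab ha hb
      (fun c h1 h2 => by simpa using hc c h1 h2)

/-- Every integral lattice in `ℝ⁵` containing `Λ₅` is isometric to one of the eight
lattices `Λ₅`, `⟨Λ₅,u1⟩`, `⟨Λ₅,w⟩`, `⟨Λ₅,t⟩`, `⟨Λ₅,u1,u3⟩`, `⟨Λ₅,u1,f1⟩`, `⟨Λ₅,w,t⟩`,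
`⟨Λ₅,u1,u3,f1⟩`. -/
theorem integral_lattices_containing_Λ5 (L : Submodule ℤ (E 5))
    (hL : LatticeIsIntegral L) (hΛ : Λ5 ≤ L) :
    IsometricLattices L Λ5 ∨
    IsometricLattices L (Λ5 ⊔ Submodule.span ℤ {u1}) ∨
    IsometricLattices L (Λ5 ⊔ Submodule.span ℤ {w}) ∨
    IsometricLattices L (Λ5 ⊔ Submodule.span ℤ {t}) ∨
    IsometricLattices L (Λ5 ⊔ Submodule.span ℤ {u1, u3}) ∨
    IsometricLattices L (Λ5 ⊔ Submodule.span ℤ {u1, f1}) ∨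
    IsometricLattices L (Λ5 ⊔ Submodule.span ℤ {w, t}) ∨
    IsometricLattices L (Λ5 ⊔ Submodule.span ℤ {u1, u3, f1}) := by
  have e : L = (L.comap phi).map phi := by
    apply le_antisymm
    · intro x hx
      obtain ⟨y, rfl⟩ := exists_phi L hL hΛ x hx
      exact ⟨y, hx, rfl⟩
    · exact Submodule.map_comap_le _ _
  have nice : Nice (L.comap phi) := by
    constructor
    · intro x hx y hy
      obtain ⟨k, hk⟩ := hL _ hx _ hy
      rw [inner_phi] at hk
      refine ⟨k, ?_⟩
      have : ((x 0 * y 0 + x 1 * y 1 + x 2 * y 2 + x 3 * y 3 + x 4 * y 4 : ℤ) : ℝ)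
          = ((k + k : ℤ) : ℝ) := by
        push_cast at hk ⊢
        linarith
      exact_mod_cast this
    · intro z hz
      exact hΛ (phi_two_mem z hz)
  have := good_nice nice
  rw [← e] at this
  exact this
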